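/- For every positive integer w, the series ∑_{n=0}^∞ (2n+1) ∏_{i=0}^{n-1} (w+i)/(3+w+i) converges to (w+2)(2w+1)/2. Probabilistically: the waiting time T_{3,w} for the first black ball in a Pólya urn with 3 black and w white balls satisfies E[T_{3,w}²] = (w+2)(2w+1)/2. -/

import Mathlib

/-!
Write `S b w n = ∏_{i<n} (w+i)/(b+w+i)` for the probability that the first `n` draws from an urn
with `b` black and `w` white balls are all white. Adding a black ball divides `S` by a linear
function of `n`: `(b+w+n) S (b+1) w n = (b+w) S b w n`. Hence
`b S (b+1) w n = (b+w) (S b w n - S b w (n+1))` telescopes, and the mean of the waiting time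
follows from `S b w n → 0`, that is, from the divergence of the harmonic series. The same relation
trades the linear weight `2n+1` for one black ball fewer, so the second moment is a combination of
the means for `b - 1` and `b` black balls.
-/

open Filter Topology

theorem tendsto_prod_one_sub_zero_of_not_summable {a : ℕ → ℝ} (ha₀ : ∀ i, 0 ≤ a i)
    (ha₁ : ∀ i, a i ≤ 1) (ha : ¬ Summable a) :
    Tendsto (fun n ↦ ∏ i ∈ Finset.range n, (1 - a i)) atTop (𝓝 0) := by
  have hexp : Tendsto (fun n ↦ Real.exp (-∑ i ∈ Finset.range n, a i)) atTop (𝓝 0) :=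
    Real.tendsto_exp_neg_atTop_nhds_zero.comp
      ((not_summable_iff_tendsto_nat_atTop_of_nonneg ha₀).1 ha)
  refine squeeze_zero (fun n ↦ Finset.prod_nonneg fun i _ ↦ sub_nonneg.2 (ha₁ i)) (fun n ↦ ?_) hexp
  calc ∏ i ∈ Finset.range n, (1 - a i)
      ≤ ∏ i ∈ Finset.range n, Real.exp (-a i) :=
        Finset.prod_le_prod (fun i _ ↦ sub_nonneg.2 (ha₁ i)) fun i _ ↦ Real.one_sub_le_exp_neg _
    _ = Real.exp (-∑ i ∈ Finset.range n, a i) := by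
        rw [← Real.exp_sum, Finset.sum_neg_distrib]

theorem hasSum_sub_succ_of_antitone {f : ℕ → ℝ} {l : ℝ} (hf : Antitone f)
    (hlim : Tendsto f atTop (𝓝 l)) : HasSum (fun n ↦ f n - f (n + 1)) (f 0 - l) := by
  rw [hasSum_iff_tendsto_nat_of_nonneg fun n ↦ sub_nonneg.2 (hf n.le_succ)]
  simpa only [Finset.sum_range_sub'] using hlim.const_sub (f 0)

/-- The probability `P(T > n)` that the first `n` draws from a Pólya urn with `b` black and `w`
white balls are all white. Real parameters are allowed, so that `b` and `w` may be weights. -/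
noncomputable def polyaSurvival (b w : ℝ) (n : ℕ) : ℝ :=
  ∏ i ∈ Finset.range n, (w + i) / (b + w + i)

theorem polyaSurvival_zero (b w : ℝ) : polyaSurvival b w 0 = 1 :=
  Finset.prod_range_zero _

theorem polyaSurvival_succ (b w : ℝ) (n : ℕ) :
    polyaSurvival b w (n + 1) = polyaSurvival b w n * ((w + n) / (b + w + n)) :=
  Finset.prod_range_succ _ n

section

variable {b w : ℝ}

theorem polyaSurvival_nonneg (hb : 0 ≤ b) (hw : 0 ≤ w) (n : ℕ) : 0 ≤ polyaSurvival b w n :=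
  Finset.prod_nonneg fun _ _ ↦ by positivity

theorem antitone_polyaSurvival (hb : 0 ≤ b) (hw : 0 ≤ w) : Antitone (polyaSurvival b w) := by
  refine antitone_nat_of_succ_le fun n ↦ ?_
  rw [polyaSurvival_succ]
  exact mul_le_of_le_one_right (polyaSurvival_nonneg hb hw n)
    (div_le_one_of_le₀ (by linarith) (by positivity))

theorem tendsto_polyaSurvival_zero (hb : 0 < b) (hw : 0 ≤ w) :
    Tendsto (polyaSurvival b w) atTop (𝓝 0) := by
  have hharm : ¬ Summable fun i : ℕ ↦ b / (b + w + i) := by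
    have h := (Real.summable_one_div_nat_add_rpow (b + w) 1).not.2 (lt_irrefl 1)
    refine fun hs ↦ h ((hs.mul_left b⁻¹).congr fun i ↦ ?_)
    rw [Real.rpow_one, abs_of_nonneg (by positivity), add_comm (i : ℝ)]
    field_simp
  have hle (i : ℕ) : b / (b + w + i) ≤ 1 :=
    div_le_one_of_le₀ (by linarith [i.cast_nonneg (α := ℝ)]) (by positivity)
  have hfactor (i : ℕ) : 1 - b / (b + w + i) = (w + i) / (b + w + i) := by
    rw [one_sub_div (by positivity)]
    ring
  exact (tendsto_prod_one_sub_zero_of_not_summable (fun i ↦ by positivity) hle hharm).congr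
    fun n ↦ Finset.prod_congr rfl fun i _ ↦ hfactor i

theorem mul_polyaSurvival_add_one (hbw : 0 < b + w) (n : ℕ) :
    (b + w + n) * polyaSurvival (b + 1) w n = (b + w) * polyaSurvival b w n := by
  induction n with
  | zero => simp [polyaSurvival_zero]
  | succ n ih =>
    have h₀ : b + w + n ≠ 0 := by positivity
    have h₁ : b + 1 + w + n ≠ 0 := by
      rw [add_right_comm b]
      positivity
    calc (b + w + (n + 1 : ℕ)) * polyaSurvival (b + 1) w (n + 1)
        = (w + n) * polyaSurvival (b + 1) w n := by
          rw [polyaSurvival_succ]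
          push_cast
          field_simp
          ring
      _ = (b + w + n) * polyaSurvival (b + 1) w n * ((w + n) / (b + w + n)) := by field_simp
      _ = (b + w) * polyaSurvival b w (n + 1) := by rw [ih, polyaSurvival_succ, mul_assoc]

theorem mul_polyaSurvival_sub_succ (hbw : 0 < b + w) (n : ℕ) :
    (b + w) * (polyaSurvival b w n - polyaSurvival b w (n + 1)) =
      b * polyaSurvival (b + 1) w n := by
  have h : b + w + n ≠ 0 := by positivity
  calc (b + w) * (polyaSurvival b w n - polyaSurvival b w (n + 1))
      = (b + w) * polyaSurvival b w n * (b / (b + w + n)) := by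
        rw [polyaSurvival_succ]
        field_simp
        ring
    _ = b * polyaSurvival (b + 1) w n := by
        rw [← mul_polyaSurvival_add_one hbw]
        field_simp

theorem hasSum_polyaSurvival (hb : 1 < b) (hw : 0 ≤ w) :
    HasSum (polyaSurvival b w) ((b + w - 1) / (b - 1)) := by
  obtain ⟨c, rfl⟩ : ∃ c, b = c + 1 := ⟨b - 1, (sub_add_cancel b 1).symm⟩
  have hc : 0 < c := by linarith
  have htel (n : ℕ) : polyaSurvival (c + 1) w n =
      (c + w) / c * (polyaSurvival c w n - polyaSurvival c w (n + 1)) := by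
    rw [div_mul_eq_mul_div, mul_polyaSurvival_sub_succ (by positivity),
      mul_div_cancel_left₀ _ hc.ne']
  have hmean : (c + 1 + w - 1) / (c + 1 - 1) = (c + w) / c * (polyaSurvival c w 0 - 0) := by
    rw [polyaSurvival_zero]
    ring
  rw [funext htel, hmean]
  exact (hasSum_sub_succ_of_antitone (antitone_polyaSurvival hc.le hw)
    (tendsto_polyaSurvival_zero hc hw)).mul_left _

theorem polya_three_black_second_moment_general (hb : 2 < b) (hw : 0 ≤ w) :
    HasSum (fun n : ℕ ↦ (2 * (n : ℝ) + 1) * polyaSurvival b w n)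
      ((b + w - 1) * (b + 2 * w - 2) / ((b - 1) * (b - 2))) := by
  have hb₁ : b - 1 ≠ 0 := by linarith
  have hb₂ : b - 2 ≠ 0 := by linarith
  have hweight (n : ℕ) : (2 * (n : ℝ) + 1) * polyaSurvival b w n =
      2 * (b + w - 1) * polyaSurvival (b - 1) w n - (2 * (b + w) - 3) * polyaSurvival b w n := by
    have h := mul_polyaSurvival_add_one (b := b - 1) (w := w) (by linarith) n
    rw [sub_add_cancel] at h
    linear_combination 2 * h
  have hvalue : (b + w - 1) * (b + 2 * w - 2) / ((b - 1) * (b - 2)) =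
      2 * (b + w - 1) * ((b - 1 + w - 1) / (b - 1 - 1)) -
        (2 * (b + w) - 3) * ((b + w - 1) / (b - 1)) := by
    rw [show b - 1 - 1 = b - 2 by ring]
    field_simp
    ring
  rw [funext hweight, hvalue]
  exact ((hasSum_polyaSurvival (by linarith) hw).mul_left _).sub
    ((hasSum_polyaSurvival (by linarith) hw).mul_left _)

end

/-- The waiting time `T_{3,w}` for the first black ball in a Pólya urn with 3 black and
`w ≥ 1` white balls satisfies
`E[T_{3,w}²] = ∑_{n=0}^∞ (2n+1) ∏_{i=0}^{n-1} (w+i)/(3+w+i) = (w+2)(2w+1)/2`. -/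
theorem polya_three_black_second_moment (w : ℕ) (hw : 1 ≤ w) :
    HasSum (fun n : ℕ =>
        (2 * (n : ℝ) + 1) * ∏ i ∈ Finset.range n, (((w : ℝ) + i) / (3 + (w : ℝ) + i)))
      (((w : ℝ) + 2) * (2 * (w : ℝ) + 1) / 2) := by
  rw [show ((w : ℝ) + 2) * (2 * w + 1) / 2 = (3 + w - 1) * (3 + 2 * w - 2) / ((3 - 1) * (3 - 2)) by
    ring]
  exact polya_three_black_second_moment_general (by norm_num) w.cast_nonneg
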